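/- Let n ≥ 1. For a multi-index I = (i_1,…,i_n) of non-negative integers, let C_I : S_{n+1} → R be C_I(σ) = ∏_{m=1}^n z_{σ(m)}^{i_m}, and let A_n = { I = (i_1,…,i_n) : 0 ≤ i_m ≤ n+1−m for each m }. Then each C_I belongs to K_α(Γ) and is S_{n+1}-invariant (C_I(w) = w·C_I(id) for all w), and the family { C_I : I ∈ A_n } is a basis of K_α(Γ) as a module over R. -/

import Mathlib

/-- The Laurent polynomial ring `R = ℤ[z₁^{±1},…,z_n^{±1}]`, realized as the group
algebra of `ℤⁿ` over `ℤ`. -/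
abbrev Laur (n : ℕ) : Type := AddMonoidAlgebra ℤ (Fin n → ℤ)

/-- The variable `z_j ∈ R`. -/
noncomputable def Z (n : ℕ) (j : Fin n) : Laur n :=
  AddMonoidAlgebra.single (Pi.single j 1) 1

/-- The action of `σ ∈ S_n` on `R` by the ring automorphism permuting the variables,
`σ·z_i = z_{σ(i)}`. -/
noncomputable def permAut (n : ℕ) (σ : Equiv.Perm (Fin n)) : Laur n ≃ₐ[ℤ] Laur n :=
  AddMonoidAlgebra.domCongr ℤ ℤ
    { Equiv.piCongrLeft' (fun _ => ℤ) σ with map_add' := fun _ _ => rfl }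

/-- Membership in `K_α(Γ)` for the permutahedron `Γ` (GKM graph of `Fl(ℂ^{n+1})`, vertex
set `S_{n+1}`, edges `σ ∼ σ(i j)` with label `z_{σ(i)} − z_{σ(j)}`). -/
def IsKPClass (n : ℕ) (h : Equiv.Perm (Fin (n + 1)) → Laur (n + 1)) : Prop :=
  ∀ (σ : Equiv.Perm (Fin (n + 1))) (i j : Fin (n + 1)), i ≠ j →
    (Z (n + 1) (σ i) - Z (n + 1) (σ j)) ∣ h σ - h (σ * Equiv.swap i j)

/-- The class `C_I(σ) = ∏_{m=1}^n z_{σ(m)}^{i_m}`, for a multi-index `I = (i_1,…,i_n)`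
(the index `m : Fin n` codes the letter `m+1 ∈ {1,…,n} ⊂ {1,…,n+1}`). -/
noncomputable def CI (n : ℕ) (I : Fin n → ℕ) (σ : Equiv.Perm (Fin (n + 1))) :
    Laur (n + 1) :=
  ∏ m : Fin n, Z (n + 1) (σ m.castSucc) ^ I m

open Polynomial in
/-- indexed vanishing of a polynomial -/
theorem aux_coeff_zero {A : Type*} [CommRing A] [IsDomain A] {k : ℕ} (x : Fin k → A)
    (hx : Function.Injective x) (c : Fin k → A)
    (h : ∀ s, ∑ i : Fin k, c i * x s ^ (i : ℕ) = 0) : c = 0 :=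
  Matrix.eq_zero_of_forall_index_sum_mul_pow_eq_zero hx h

/-- The product class over an arbitrary ring. -/
def gC {A : Type*} [CommRing A] {n : ℕ} (x : Fin (n + 1) → A) (I : Fin n → ℕ)
    (σ : Equiv.Perm (Fin (n + 1))) : A :=
  ∏ m : Fin n, x (σ m.castSucc) ^ I m

/-- restricted labels -/
def xr {A : Type*} {n : ℕ} (x : Fin (n + 1) → A) (p : Fin (n + 1)) : Fin n → A :=
  fun k => x (Equiv.swap 0 p k.succ)

/-- permutation built from a first value and a remaining permutation -/
def tau {n : ℕ} (p : Fin (n + 1)) (e : Equiv.Perm (Fin n)) : Equiv.Perm (Fin (n + 1)) :=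
  Equiv.Perm.decomposeFin.symm (p, e)

theorem tau_zero {n : ℕ} (p : Fin (n + 1)) (e : Equiv.Perm (Fin n)) : tau p e 0 = p := by
  simp [tau]

theorem tau_succ {n : ℕ} (p : Fin (n + 1)) (e : Equiv.Perm (Fin n)) (i : Fin n) :
    tau p e i.succ = Equiv.swap 0 p (e i).succ := by
  simp [tau]

theorem tau_surj {n : ℕ} (σ : Equiv.Perm (Fin (n + 1))) : ∃ e, σ = tau (σ 0) e := by
  obtain ⟨⟨p, e⟩, h⟩ := Equiv.Perm.decomposeFin.symm.surjective σ
  refine ⟨e, ?_⟩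
  have : σ 0 = p := by rw [← h]; exact tau_zero p e
  rw [this, ← h]; rfl

theorem tau_mul_swap {n : ℕ} (p : Fin (n + 1)) (e : Equiv.Perm (Fin n)) (i j : Fin n) :
    tau p (e * Equiv.swap i j) = tau p e * Equiv.swap i.succ j.succ := by
  ext1 k
  refine Fin.cases ?_ (fun k => ?_) k
  · rw [Equiv.Perm.mul_apply, Equiv.swap_apply_of_ne_of_ne (Fin.succ_ne_zero i).symm
      (Fin.succ_ne_zero j).symm, tau_zero, tau_zero]
  · rw [Equiv.Perm.mul_apply, (Fin.succ_injective n).swap_apply, tau_succ, tau_succ,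
      Equiv.Perm.mul_apply]

theorem gC_tau {A : Type*} [CommRing A] {n : ℕ} (x : Fin (n + 2) → A) (I : Fin (n + 1) → ℕ)
    (p : Fin (n + 2)) (e : Equiv.Perm (Fin (n + 1))) :
    gC x I (tau p e) = x p ^ I 0 * gC (xr x p) (fun m => I m.succ) e := by
  unfold gC xr
  rw [Fin.prod_univ_succ]
  simp only [Fin.castSucc_zero, tau_zero, ← Fin.succ_castSucc, tau_succ]

theorem xr_inj {A : Type*} {n : ℕ} {x : Fin (n + 1) → A} (hx : Function.Injective x)
    (p : Fin (n + 1)) : Function.Injective (xr x p) := fun a b h => by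
  simpa [xr] using hx h

/-- splitting off the first index -/
theorem sum_split {A : Type*} [CommRing A] {n : ℕ} (d : Fin (n + 1) → ℕ)
    (a : ((m : Fin (n + 1)) → Fin (d m)) → A) (x : Fin (n + 2) → A)
    (p : Fin (n + 2)) (e : Equiv.Perm (Fin (n + 1))) :
    ∑ I, a I * gC x (fun m => (I m : ℕ)) (tau p e) =
    ∑ J : (m : Fin n) → Fin (d m.succ),
      (∑ i : Fin (d 0), a (Fin.cons i J) * x p ^ (i : ℕ)) *
        gC (xr x p) (fun m => (J m : ℕ)) e := by
  rw [← (Fin.consEquiv (fun m => Fin (d m))).sum_comp, Fintype.sum_prod_type_right]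
  refine Finset.sum_congr rfl fun J _ => ?_
  rw [Finset.sum_mul]
  refine Finset.sum_congr rfl fun i _ => ?_
  rw [gC_tau]
  simp [Fin.consEquiv, mul_assoc]

theorem gC_indep {A : Type*} [CommRing A] [IsDomain A] : ∀ (n : ℕ) (d : Fin n → ℕ)
    (_ : ∀ m, d m = n + 1 - (m : ℕ)) (x : Fin (n + 1) → A) (_ : Function.Injective x)
    (a : ((m : Fin n) → Fin (d m)) → A)
    (_ : ∀ σ, ∑ I, a I * gC x (fun m => (I m : ℕ)) σ = 0), a = 0 := by
  intro n
  induction n with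
  | zero =>
    intro d hd x hx a h
    funext I
    have := h 1
    rw [Fintype.sum_unique] at this
    simp only [gC, Finset.univ_eq_empty, Finset.prod_empty, mul_one] at this
    rw [Subsingleton.elim I default, this]; rfl
  | succ n ih =>
    intro d hd x hx a h
    have key : ∀ p, (fun J : (m : Fin n) → Fin (d m.succ) =>
        ∑ i : Fin (d 0), a (Fin.cons i J) * x p ^ (i : ℕ)) = 0 := by
      intro p
      refine ih (fun m => d m.succ) (fun m => ?_) (xr x p) (xr_inj hx p) _ (fun e => ?_)
      · rw [hd]; simp
      · rw [← sum_split]; exact h _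
    have hd0 : d 0 = n + 2 := by rw [hd]; simp
    funext I
    have h2 : (fun i : Fin (d 0) => a (Fin.cons i (Fin.tail I))) = 0 := by
      refine aux_coeff_zero (fun s => x (Fin.cast hd0 s)) (fun u v huv => by
        simpa using hx huv) _ (fun s => ?_)
      exact congrFun (key _) (Fin.tail I)
    have := congrFun h2 (I 0)
    simpa using this

/-- the coprimality hypotheses on the labels -/
structure Good {A : Type*} [CommRing A] {k : ℕ} (x : Fin k → A) : Prop where
  prime : ∀ s t, s ≠ t → Prime (x s - x t)
  ndvd : ∀ s t u v, u ≠ v → u ≠ s → v ≠ s → ¬ (x s - x t ∣ x u - x v)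

theorem Good.comp {A : Type*} [CommRing A] {k l : ℕ} {x : Fin k → A} (h : Good x)
    (f : Fin l → Fin k) (hf : Function.Injective f) : Good (x ∘ f) where
  prime s t hst := h.prime _ _ (hf.ne hst)
  ndvd s t u v h1 h2 h3 := h.ndvd _ _ _ _ (hf.ne h1) (hf.ne h2) (hf.ne h3)

theorem Good.xr {A : Type*} [CommRing A] {k : ℕ} {x : Fin (k + 1) → A} (h : Good x)
    (p : Fin (k + 1)) : Good (xr x p) :=
  h.comp (fun k => Equiv.swap 0 p k.succ) fun a b hab => by simpa using hab

open Polynomial in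
theorem newton {A : Type*} [CommRing A] [IsDomain A] : ∀ (k : ℕ) (x : Fin k → A) (_ : Good x)
    (f : Fin k → A) (_ : ∀ s t, s ≠ t → x s - x t ∣ f s - f t),
    ∃ P : A[X], P.degree < k ∧ ∀ s, P.eval (x s) = f s := by
  intro k
  induction k with
  | zero => intro x _ f _; exact ⟨0, by simp, fun s => s.elim0⟩
  | succ k ih =>
    intro x hx f hf
    have h1 : ∀ s : Fin k, ∃ g, f s.succ - f 0 = (x s.succ - x 0) * g :=
      fun s => hf s.succ 0 (Fin.succ_ne_zero s)
    choose g hg using h1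
    obtain ⟨Q, hQ, hQe⟩ := ih (x ∘ Fin.succ) (hx.comp _ (Fin.succ_injective k)) g (by
      intro s t hst
      have hst' : s.succ ≠ t.succ := (Fin.succ_injective k).ne hst
      have h3 : x s.succ - x t.succ ∣ (x t.succ - x 0) * (g s - g t) := by
        have := hf _ _ hst'
        have e : (x t.succ - x 0) * (g s - g t) =
            (f s.succ - f t.succ) - (x s.succ - x t.succ) * g s := by
          linear_combination hg t - hg s
        rw [e]
        exact dvd_sub this (dvd_mul_right _ _)
      rcases (hx.prime _ _ hst').dvd_or_dvd h3 with h | h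
      · exact absurd h (by
          have h4 := hx.ndvd t.succ s.succ s.succ 0 (Fin.succ_ne_zero s) hst'
            (Fin.succ_ne_zero t).symm
          intro h5
          apply h4
          rw [← neg_sub, neg_dvd]
          have : x s.succ - x 0 = (x s.succ - x t.succ) + (x t.succ - x 0) := by ring
          rw [this]
          exact dvd_add dvd_rfl h5)
      · exact h)
    refine ⟨C (f 0) + (X - C (x 0)) * Q, ?_, fun s => ?_⟩
    · refine (degree_add_le _ _).trans_lt (max_lt ?_ ?_)
      · exact degree_C_le.trans_lt (by exact_mod_cast Nat.succ_pos k)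
      · rw [degree_mul, degree_X_sub_C]
        push_cast
        rw [add_comm]
        exact WithBot.add_lt_add_right (by simp) hQ
    · refine Fin.cases ?_ (fun s => ?_) s
      · simp
      · have := hQe s
        simp only [Function.comp] at this
        simp only [eval_add, eval_C, eval_mul, eval_sub, eval_X, this]
        linear_combination -hg s

/-- generalized class condition -/
def gK {A : Type*} [CommRing A] {k : ℕ} (x : Fin k → A) (h : Equiv.Perm (Fin k) → A) : Prop :=
  ∀ (σ : Equiv.Perm (Fin k)) (i j : Fin k), i ≠ j →
    x (σ i) - x (σ j) ∣ h σ - h (σ * Equiv.swap i j)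

theorem swap_congr {A : Type*} [CommRing A] {k : ℕ} (x : Fin k → A) (σ : Equiv.Perm (Fin k))
    (i j l : Fin k) : x (σ i) - x (σ j) ∣ x (σ l) - x ((σ * Equiv.swap i j) l) := by
  rw [Equiv.Perm.mul_apply]
  rcases eq_or_ne l i with rfl | hi
  · simp
  rcases eq_or_ne l j with rfl | hj
  · rw [Equiv.swap_apply_right, ← neg_sub, neg_dvd]
  · simp [Equiv.swap_apply_of_ne_of_ne hi hj]

theorem prod_congr_dvd {A ι : Type*} [CommRing A] (s : Finset ι) (q : A) (f g : ι → A)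
    (I : ι → ℕ) (h : ∀ m, q ∣ f m - g m) :
    q ∣ ∏ m ∈ s, f m ^ I m - ∏ m ∈ s, g m ^ I m := by
  rw [← Ideal.mem_span_singleton, ← Ideal.Quotient.eq]
  simp only [map_prod, map_pow]
  refine Finset.prod_congr rfl fun m _ => ?_
  congr 1
  rw [Ideal.Quotient.eq, Ideal.mem_span_singleton]
  exact h m

theorem gC_class {A : Type*} [CommRing A] {n : ℕ} (x : Fin (n + 1) → A) (I : Fin n → ℕ) :
    gK x (gC x I) := by
  intro σ i j _
  exact prod_congr_dvd _ _ _ _ _ fun m => swap_congr x σ i j _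

theorem gC_xr {A : Type*} [CommRing A] {n : ℕ} (x : Fin (n + 2) → A) (J : Fin n → ℕ)
    (p : Fin (n + 2)) (e : Equiv.Perm (Fin (n + 1))) :
    gC (xr x p) J e = ∏ m : Fin n, x (tau p e m.castSucc.succ) ^ J m := by
  simp [gC, xr, tau_succ]

theorem gC_span {A : Type*} [CommRing A] [IsDomain A] : ∀ (n : ℕ) (d : Fin n → ℕ)
    (_ : ∀ m, d m = n + 1 - (m : ℕ)) (x : Fin (n + 1) → A) (_ : Good x)
    (h : Equiv.Perm (Fin (n + 1)) → A) (_ : gK x h),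
    ∃ a : ((m : Fin n) → Fin (d m)) → A, ∀ σ, h σ = ∑ I, a I * gC x (fun m => (I m : ℕ)) σ := by
  intro n
  induction n with
  | zero =>
    intro d hd x hx h hh
    refine ⟨fun _ => h 1, fun σ => ?_⟩
    have hσ : σ = 1 := Equiv.ext fun i => Subsingleton.elim (α := Fin 1) _ _
    rw [Fintype.sum_unique, hσ]
    simp [gC]
  | succ n ih =>
    intro d hd x hx h hh
    have hd' : ∀ m : Fin n, d m.succ = n + 1 - (m : ℕ) := fun m => by rw [hd]; simp
    have hd0 : d 0 = n + 2 := by rw [hd]; simp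
    have step : ∀ p, ∃ b : ((m : Fin n) → Fin (d m.succ)) → A, ∀ e,
        h (tau p e) = ∑ J, b J * gC (xr x p) (fun m => (J m : ℕ)) e := by
      intro p
      refine ih (fun m => d m.succ) hd' (xr x p) (hx.xr p) (fun e => h (tau p e)) ?_
      intro e i j hij
      have := hh (tau p e) i.succ j.succ ((Fin.succ_injective _).ne hij)
      rw [tau_succ, tau_succ] at this
      simp only [tau_mul_swap]
      exact this
    choose b hb using step
    have cong : ∀ J p q, p ≠ q → x p - x q ∣ b p J - b q J := by
      intro J p q hpq
      have hp := hx.prime p q hpq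
      let K : Ideal A := Ideal.span {x p - x q}
      have : K.IsPrime := (Ideal.span_singleton_prime hp.ne_zero).2 hp
      let π : A →+* A ⧸ K := Ideal.Quotient.mk K
      have hπ : ∀ u v, π u = π v ↔ x p - x q ∣ u - v := fun u v => by
        rw [Ideal.Quotient.eq, Ideal.mem_span_singleton]
      have hz := gC_indep n (fun m => d m.succ) hd' (π ∘ xr x p) (by
        intro u v huv
        by_contra hne
        have h1 := (hπ _ _).1 huv
        have aux : ∀ w : Fin (n + 1), Equiv.swap 0 p w.succ ≠ p := fun w hw => by
          rw [Equiv.swap_apply_eq_iff, Equiv.swap_apply_right] at hw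
          exact Fin.succ_ne_zero w hw
        exact hx.ndvd p q _ _ (fun h2 => hne (by simpa using h2)) (aux u) (aux v) h1)
        (fun J => π (b p J) - π (b q J)) (by
        intro e
        obtain ⟨j, hj⟩ := (tau p e).surjective q
        have hj0 : (0 : Fin (n + 2)) ≠ j := by
          rintro rfl
          rw [tau_zero] at hj; exact hpq hj
        obtain ⟨e', he'⟩ := tau_surj (tau p e * Equiv.swap 0 j)
        have hq : (tau p e * Equiv.swap 0 j) 0 = q := by simp [hj]
        rw [hq] at he'
        have h1 := hh (tau p e) 0 j hj0
        rw [he', tau_zero, hj, ← hπ, hb, hb, map_sum, map_sum] at h1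
        have h2 : ∀ J : (m : Fin n) → Fin (d m.succ),
            gC (π ∘ xr x p) (fun m => (J m : ℕ)) e = π (gC (xr x p) (fun m => (J m : ℕ)) e) := by
          intro J; simp [gC]
        have h3 : ∀ J : (m : Fin n) → Fin (d m.succ),
            π (gC (xr x p) (fun m => (J m : ℕ)) e) =
            π (gC (xr x q) (fun m => (J m : ℕ)) e') := by
          intro J
          rw [hπ, gC_xr, gC_xr, ← he']
          refine prod_congr_dvd _ _ _ _ _ fun m => ?_
          have := swap_congr x (tau p e) 0 j m.castSucc.succ
          rwa [tau_zero, hj] at this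
        simp only [h2, sub_mul, Finset.sum_sub_distrib]
        rw [sub_eq_zero]
        simp only [map_mul] at h1
        rw [h1]
        exact Finset.sum_congr rfl fun J _ => by rw [h3])
      have := congrFun hz J
      exact (hπ _ _).1 (sub_eq_zero.1 this)
    have hP := fun J => newton (n + 2) x hx (fun p => b p J) (cong J)
    choose P hPd hPe using hP
    refine ⟨fun I => (P (Fin.tail I)).coeff (I 0 : ℕ), fun σ => ?_⟩
    obtain ⟨e, he⟩ := tau_surj σ
    rw [he, sum_split, hb]
    refine Finset.sum_congr rfl fun J _ => ?_
    congr 1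
    rw [← hPe]
    simp only [Fin.tail_cons, Fin.cons_zero]
    rw [Fin.sum_univ_eq_sum_range (fun i => (P J).coeff i * x (σ 0) ^ i) (d 0)]
    refine Polynomial.eval_eq_sum_range' ?_ _
    rw [hd0]
    by_cases h0 : P J = 0
    · simp [h0]
    · exact (Polynomial.natDegree_lt_iff_degree_lt h0).2 (hPd J)

/-- additive map on exponents induced by a map of indices -/
def pushHom (k : ℕ) (f : Fin k → Fin k) : (Fin k → ℤ) →+ (Fin k → ℤ) where
  toFun g := ∑ j, Pi.single (f j) (g j)
  map_zero' := by simp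
  map_add' a b := by simp [Pi.single_add, Finset.sum_add_distrib]

/-- substitution of variables -/
noncomputable def substZ (k : ℕ) (f : Fin k → Fin k) : Laur k →+* Laur k :=
  AddMonoidAlgebra.mapDomainRingHom ℤ (pushHom k f)

theorem pushHom_single (k : ℕ) (f : Fin k → Fin k) (j : Fin k) :
    pushHom k f (Pi.single j 1) = Pi.single (f j) 1 := by
  change ∑ i, (Pi.single (f i) ((Pi.single j 1 : Fin k → ℤ) i) : Fin k → ℤ) = _
  rw [Finset.sum_eq_single j]
  · simp
  · intro b _ hb
    simp [hb]
  · simp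

theorem subst_Z (k : ℕ) (f : Fin k → Fin k) (j : Fin k) : substZ k f (Z k j) = Z k (f j) := by
  unfold substZ Z
  rw [AddMonoidAlgebra.mapDomainRingHom_apply, AddMonoidAlgebra.mapDomain_single]
  rw [← pushHom_single]

theorem hom_ext_Z {k : ℕ} {B : Type*} [CommRing B] (φ ψ : Laur k →+* B)
    (h : ∀ j, φ (Z k j) = ψ (Z k j)) : φ = ψ := by
  have mulS : ∀ a b : Fin k → ℤ, (AddMonoidAlgebra.single (a + b) 1 : Laur k) =
      AddMonoidAlgebra.single a 1 * AddMonoidAlgebra.single b 1 := fun a b => by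
    rw [AddMonoidAlgebra.single_mul_single, one_mul]
  let S : AddSubgroup (Fin k → ℤ) :=
    { carrier := {a | φ (AddMonoidAlgebra.single a 1) = ψ (AddMonoidAlgebra.single a 1)}
      zero_mem' := by
        change φ (AddMonoidAlgebra.single 0 1) = ψ (AddMonoidAlgebra.single 0 1)
        rw [← AddMonoidAlgebra.one_def, map_one, map_one]
      add_mem' := by
        intro a b ha hb
        simp only [Set.mem_ofPred_eq] at *
        rw [mulS, map_mul, map_mul, ha, hb]
      neg_mem' := by
        intro a ha
        simp only [Set.mem_ofPred_eq] at *
        have e : (AddMonoidAlgebra.single a 1 : Laur k) * AddMonoidAlgebra.single (-a) 1 = 1 := by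
          rw [← mulS, add_neg_cancel, AddMonoidAlgebra.one_def]
        have e1 := congrArg φ e
        have e2 := congrArg ψ e
        rw [map_mul, map_one] at e1 e2
        rw [← ha] at e2
        calc _ = φ (AddMonoidAlgebra.single (-a) 1) *
              (φ (AddMonoidAlgebra.single a 1) * ψ (AddMonoidAlgebra.single (-a) 1)) := by
              rw [e2, mul_one]
          _ = (φ (AddMonoidAlgebra.single a 1) * φ (AddMonoidAlgebra.single (-a) 1)) *
              ψ (AddMonoidAlgebra.single (-a) 1) := by ring
          _ = _ := by rw [e1, one_mul] }
  have hS : ∀ a, a ∈ S := by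
    intro a
    have : a = ∑ j, a j • (Pi.single j 1 : Fin k → ℤ) := by
      funext i
      simp [Finset.sum_apply, Pi.single_apply]
    rw [this]
    exact sum_mem fun j _ => zsmul_mem (show _ ∈ S from h j) _
  refine AddMonoidAlgebra.ringHom_ext (fun b => ?_) (fun a => hS a)
  have : (AddMonoidAlgebra.single 0 b : Laur k) = (b : Laur k) := by
    rw [AddMonoidAlgebra.intCast_def]; rfl
  rw [this, map_intCast, map_intCast]

theorem Z_inj (k : ℕ) : Function.Injective (Z k) := by
  intro s t h
  by_contra hst
  unfold Z at h
  have h1 := AddMonoidAlgebra.of_injective (R := ℤ) (M := Fin k → ℤ)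
    (a₁ := Multiplicative.ofAdd (Pi.single s 1)) (a₂ := Multiplicative.ofAdd (Pi.single t 1)) h
  have h2 := congrFun (Multiplicative.ofAdd.injective h1) s
  simp [hst] at h2

theorem Z_good (k : ℕ) : Good (Z k) := by
  have hid : ∀ s t, substZ k (Function.update id s t) (Z k s - Z k t) = 0 := fun s t => by
    rw [map_sub, subst_Z, subst_Z, sub_eq_zero]
    by_cases h : t = s
    · subst h; simp
    · simp [Function.update_of_ne h]
  have hdv : ∀ s t u, Z k s - Z k t ∣ u → substZ k (Function.update id s t) u = 0 := by
    rintro s t _ ⟨c, rfl⟩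
    rw [map_mul, hid, zero_mul]
  have hmod : ∀ s t u, Z k s - Z k t ∣ u - substZ k (Function.update id s t) u := by
    intro s t u
    rw [← Ideal.mem_span_singleton, ← Ideal.Quotient.eq]
    have := hom_ext_Z (Ideal.Quotient.mk (Ideal.span {Z k s - Z k t}))
      ((Ideal.Quotient.mk (Ideal.span {Z k s - Z k t})).comp
        (substZ k (Function.update id s t))) (by
        intro j
        rw [RingHom.comp_apply, subst_Z, Ideal.Quotient.eq, Ideal.mem_span_singleton]
        by_cases h : j = s
        · subst h; simp
        · simp [Function.update_of_ne h])
    exact DFunLike.congr_fun this u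
  refine ⟨fun s t hst => ⟨?_, ?_, ?_⟩, ?_⟩
  · exact sub_ne_zero.2 ((Z_inj k).ne hst)
  · intro hu
    have := hu.map (substZ k (Function.update id s t))
    rw [hid] at this
    exact not_isUnit_zero this
  · intro a b hab
    have h0 := hdv _ _ _ hab
    rw [map_mul, mul_eq_zero] at h0
    rcases h0 with h0 | h0
    · left; simpa [h0] using hmod s t a
    · right; simpa [h0] using hmod s t b
  · intro s t u v huv hus hvs hd
    have := hdv _ _ _ hd
    rw [map_sub, subst_Z, subst_Z, sub_eq_zero, Function.update_of_ne hus,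
      Function.update_of_ne hvs] at this
    exact huv (Z_inj k this)

theorem permAut_Z (k : ℕ) (σ : Equiv.Perm (Fin k)) (j : Fin k) :
    permAut k σ (Z k j) = Z k (σ j) := by
  unfold permAut Z
  rw [AddMonoidAlgebra.domCongr_single]
  congr 1
  funext i
  change (Pi.single j 1 : Fin k → ℤ) (σ.symm i) = _
  simp only [Pi.single_apply, Equiv.symm_apply_eq]

/-- each `C_I` is an `S_{n+1}`-invariant class in `K_α(Γ)`, and the family
`{C_I : I ∈ A_n}`, `A_n = {I : 0 ≤ i_m ≤ n+1−m}`, is a basis of `K_α(Γ)` over `R`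
(the multi-indices with `i_m ≤ n+1−m`, `m = 1,…,n`, being coded as dependent functions
`I : (m : Fin n) → Fin (n+1−m)`). -/
theorem stmt10 (n : ℕ) (hn : 1 ≤ n) :
    (∀ I : Fin n → ℕ, IsKPClass n (CI n I)) ∧
    (∀ (I : Fin n → ℕ) (w : Equiv.Perm (Fin (n + 1))),
      CI n I w = permAut (n + 1) w (CI n I 1)) ∧
    (∀ h, IsKPClass n h →
      ∃! a : ((m : Fin n) → Fin (n + 1 - (m : ℕ))) → Laur (n + 1),
        h = fun σ => ∑ I : (m : Fin n) → Fin (n + 1 - (m : ℕ)),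
          a I * CI n (fun m => (I m : ℕ)) σ) := by
  refine ⟨fun I => gC_class (Z (n + 1)) I, fun I w => ?_, fun h hh => ?_⟩
  · simp only [CI, map_prod, map_pow, permAut_Z, Equiv.Perm.one_apply]
  · obtain ⟨a, ha⟩ := gC_span n (fun m => n + 1 - (m : ℕ)) (fun _ => rfl) (Z (n + 1))
      (Z_good _) h hh
    refine ⟨a, funext ha, fun a' ha' => ?_⟩
    have := gC_indep n (fun m => n + 1 - (m : ℕ)) (fun _ => rfl) (Z (n + 1))
      (Z_inj _) (a' - a) (fun σ => by
        have h1 := ha σ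
        rw [ha'] at h1
        simp only [Pi.sub_apply, sub_mul, Finset.sum_sub_distrib]
        exact sub_eq_zero.2 h1)
    exact sub_eq_zero.1 this
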